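/- arXiv:math/0610278 — 2 statements merged into one kernel-verified Lean document; each statement's English description precedes it below -/
import Mathlib

section
/- Let 0 < q < 1, let m ≥ 1, and let x_1,…,x_{2m} be nonzero complex numbers such that for all i ≠ j, x_j/x_i ≠ −q^l for every l ∈ ℤ (so that θ(−x_j/x_i;q) ≠ 0). Then pfaff_{1≤i,j≤2m}(θ(x_j/x_i;q)/θ(−x_j/x_i;q)) = Π_{1≤i<j≤2m} θ(x_j/x_i;q)/θ(−x_j/x_i;q). -/
/-- The pfaffian-type sum `(1/(2^M · M!)) · Σ_σ sgn(σ) · Π_{i=1}^{M} a_{σ(2i−1),σ(2i)}`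
with `M = ⌊m/2⌋`. -/
noncomputable def pfaff (m : ℕ) (A : Matrix (Fin m) (Fin m) ℂ) : ℂ :=
  (1 / ((2 : ℂ) ^ (m / 2) * (Nat.factorial (m / 2) : ℂ))) *
    ∑ σ : Equiv.Perm (Fin m), ((Equiv.Perm.sign σ : ℤ) : ℂ) *
      ∏ i : Fin (m / 2),
        A (σ ⟨2 * (i : ℕ), by have := i.isLt; omega⟩)
          (σ ⟨2 * (i : ℕ) + 1, by have := i.isLt; omega⟩)
/-- The infinite q-Pochhammer symbol `(a;q)_∞ = Π_{k≥0} (1 − a q^k)`. -/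
noncomputable def qPoch (q : ℝ) (a : ℂ) : ℂ := ∏' k : ℕ, (1 - a * (q : ℂ) ^ k)

/-- The theta function `θ(x;q) = (x;q)_∞ (q/x;q)_∞`. -/
noncomputable def theta (q : ℝ) (x : ℂ) : ℂ := qPoch q x * qPoch q ((q : ℂ) / x)

/-!
Write `f z = θ(z) / θ(-z)`. The product `∏ i < j, f (x_j / x_i)` is antisymmetric in the variables,
so dividing the pfaffian by it absorbs the signs and leaves a sum of like terms over all
permutations, which has to equal `2 ^ m * m!`. This value follows by induction on `m`: with the
leading entry of the permutation fixed, the coefficients produced by the choices of the second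
entry add up to `1` by the partial fraction expansion of `t ↦ ∏ j, f (x_j t)` with an odd number of
factors. In that expansion the difference of the two sides changes sign under `t ↦ q t` and has
only removable singularities on `ℂ \ {0}`, hence vanishes by Liouville's theorem. The poles must be
distinct modulo `q ^ ℤ`; the remaining cases follow by continuity.
-/

open Equiv Filter Finset Topology

section PairSums

variable {ι K : Type*}

/-- The term `∏ i, A (y (2i)) (y (2i+1))` of the pfaffian of `A` along the sequence `y`. -/
def pairProd [CommMonoid K] (A : ι → ι → K) (m : ℕ) (y : Fin (2 * m) → ι) : K :=
  ∏ i : Fin m, A (y ⟨2 * i, by lia⟩) (y ⟨2 * i + 1, by lia⟩)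

/-- The Vandermonde-type product `∏ i < j, A (y i) (y j)`. -/
def upperProd [CommMonoid K] (A : ι → ι → K) {n : ℕ} (y : Fin n → ι) : K :=
  ∏ i, ∏ j ∈ Ioi i, A (y i) (y j)

/-- The summand of the sign-free form of the pfaffian evaluation: a term of the pfaffian divided
by the Vandermonde-type product of the same sequence. -/
def pairWeight [Field K] (A : ι → ι → K) (m : ℕ) (y : Fin (2 * m) → ι) : K :=
  pairProd A m y / upperProd A y

/-- The partial fraction expansion of `p ↦ ∏ r, A p (w r)`, for an odd number of distinct poles
`w r`. It is the only property of the matrix entries that the evaluation of the pfaffian uses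
besides antisymmetry. -/
def OddPartialFractions [Field K] (A : ι → ι → K) : Prop :=
  ∀ (n : ℕ) (w : Fin n → ι) (p : ι), Odd n → w.Injective → p ∉ Set.range w →
    ∏ r, A p (w r) = ∑ r, A p (w r) * ∏ k ∈ {r}ᶜ, (A (w r) (w k))⁻¹

section CommMonoid

variable [CommMonoid K] (A : ι → ι → K)

lemma pairProd_cons_cons {m : ℕ} (a b : ι) (z : Fin (2 * m) → ι) :
    pairProd A (m + 1) (Fin.cons a (Fin.cons b z) : Fin (2 * m + 1 + 1) → ι) =
      A a b * pairProd A m z :=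
  Fin.prod_univ_succ _

lemma upperProd_cons {n : ℕ} (a : ι) (z : Fin n → ι) :
    upperProd A (Fin.cons a z : Fin (n + 1) → ι) = (∏ j, A a (z j)) * upperProd A z := by
  simp only [upperProd, Fin.prod_univ_succ, Fin.prod_Ioi_zero, Fin.prod_Ioi_succ, Fin.cons_zero,
    Fin.cons_succ]

end CommMonoid

lemma upperProd_comp_perm [CommRing K] {A : ι → ι → K} (hA : ∀ i j, A i j = -A j i) {n : ℕ}
    (y : Fin n → ι) (σ : Perm (Fin n)) :
    upperProd A (y ∘ σ) = (Perm.sign σ : ℤ) * upperProd A y :=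
  σ.prod_Ioi_comp_eq_sign_mul_prod fun i j => hA (y i) (y j)

lemma pairWeight_cons_cons [Field K] (A : ι → ι → K) {m : ℕ} {a b : ι} (hab : A a b ≠ 0)
    (z : Fin (2 * m) → ι) :
    pairWeight A (m + 1) (Fin.cons a (Fin.cons b z) : Fin (2 * m + 1 + 1) → ι) =
      (∏ k, (A a (z k) * A b (z k))⁻¹) * pairWeight A m z := by
  change pairProd A (m + 1) _ / upperProd A (n := 2 * m + 1 + 1) _ = _
  rw [pairProd_cons_cons, upperProd_cons, upperProd_cons, Fin.prod_univ_succ, pairWeight,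
    prod_inv_distrib, prod_mul_distrib]
  simp only [Fin.cons_zero, Fin.cons_succ]
  field_simp

/-- The sequence `y` with its `p`-th and `0`-th entries exchanged and the new `0`-th one dropped. -/
def dropEntry {n : ℕ} (y : Fin (n + 1) → ι) (p : Fin (n + 1)) : Fin n → ι :=
  fun k => y (swap 0 p k.succ)

lemma dropEntry_injective {n : ℕ} {y : Fin (n + 1) → ι} (hy : y.Injective) (p : Fin (n + 1)) :
    (dropEntry y p).Injective :=
  hy.comp ((swap 0 p).injective.comp (Fin.succ_injective n))

lemma notMem_range_dropEntry {n : ℕ} {y : Fin (n + 1) → ι} (hy : y.Injective) (p : Fin (n + 1)) :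
    y p ∉ Set.range (dropEntry y p) := by
  rintro ⟨k, hk⟩
  exact Fin.succ_ne_zero k <| (swap 0 p).injective <| by rw [swap_apply_left, hy hk]

lemma prod_dropEntry [CommMonoid K] {n : ℕ} (y : Fin (n + 1) → ι) (p : Fin (n + 1)) (g : ι → K) :
    ∏ k, g (dropEntry y p k) = ∏ k ∈ {p}ᶜ, g (y k) := by
  calc
    _ = ∏ k ∈ {0}ᶜ, g (y (swap 0 p k)) := by
      rw [← Fin.image_succ_univ, prod_image (Fin.succ_injective n).injOn]
      rfl
    _ = _ := prod_equiv (swap 0 p) (by simp [swap_apply_eq_iff]) fun _ _ => rfl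

lemma sum_comp_perm_succ [AddCommMonoid K] {n : ℕ} (Φ : (Fin (n + 1) → ι) → K)
    (y : Fin (n + 1) → ι) :
    ∑ σ : Perm (Fin (n + 1)), Φ (y ∘ σ) =
      ∑ p, ∑ τ : Perm (Fin n), Φ (Fin.cons (y p) (dropEntry y p ∘ τ)) := by
  rw [← Equiv.sum_comp Perm.decomposeFin.symm, Fintype.sum_prod_type]
  refine sum_congr rfl fun p _ => sum_congr rfl fun τ _ => congrArg Φ ?_
  ext k
  refine Fin.cases ?_ (fun k => ?_) k <;> simp [dropEntry]

lemma pairWeight_cons_cons_dropEntry [Field K] (A : ι → ι → K) {m : ℕ} {a : ι}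
    (w : Fin (2 * m + 1) → ι) {r : Fin (2 * m + 1)} (har : A a (w r) ≠ 0) (τ : Perm (Fin (2 * m))) :
    pairWeight A (m + 1)
        (Fin.cons a (Fin.cons (w r) (dropEntry w r ∘ τ)) : Fin (2 * m + 1 + 1) → ι) =
      (∏ k ∈ {r}ᶜ, (A a (w k) * A (w r) (w k))⁻¹) * pairWeight A m (dropEntry w r ∘ τ) := by
  rw [pairWeight_cons_cons A har, ← prod_dropEntry w r fun i => (A a i * A (w r) i)⁻¹]
  exact congrArg (· * _) (Equiv.prod_comp τ fun k =>
    (A a (dropEntry w r k) * A (w r) (dropEntry w r k))⁻¹)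

section Field

variable [Field K] {A : ι → ι → K}

lemma OddPartialFractions.sum_prod_inv_eq_one (hA : OddPartialFractions A)
    (hne : ∀ i j, i ≠ j → A i j ≠ 0) {n : ℕ} (hn : Odd n) {w : Fin n → ι} (hw : w.Injective) {p : ι}
    (hp : p ∉ Set.range w) :
    ∑ r, ∏ k ∈ {r}ᶜ, (A p (w k) * A (w r) (w k))⁻¹ = 1 := by
  have hAp : ∀ r, A p (w r) ≠ 0 := fun r => hne _ _ fun h => hp ⟨r, h.symm⟩
  have hprod : ∏ r, A p (w r) ≠ 0 := prod_ne_zero_iff.2 fun r _ => hAp r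
  refine mul_left_cancel₀ hprod ?_
  rw [mul_one, mul_sum]
  conv_rhs => rw [hA n w p hn hw hp]
  refine sum_congr rfl fun r _ => ?_
  have hcompl : ∏ k ∈ {r}ᶜ, A p (w k) ≠ 0 := prod_ne_zero_iff.2 fun k _ => hAp k
  rw [Fintype.prod_eq_mul_prod_compl r, prod_inv_distrib, prod_mul_distrib, prod_inv_distrib]
  field_simp

theorem sum_pairWeight_comp_perm (hA : OddPartialFractions A) (hne : ∀ i j, i ≠ j → A i j ≠ 0)
    (m : ℕ) {y : Fin (2 * m) → ι} (hy : y.Injective) :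
    ∑ σ : Perm (Fin (2 * m)), pairWeight A m (y ∘ σ) = 2 ^ m * m.factorial := by
  induction m with
  | zero => simp [pairWeight, pairProd, upperProd]
  | succ m ih =>
    change Fin (2 * m + 1 + 1) → ι at y
    have hfirst (p : Fin (2 * m + 1 + 1)) :
        ∑ τ : Perm (Fin (2 * m + 1)),
          pairWeight A (m + 1) (Fin.cons (y p) (dropEntry y p ∘ τ) : Fin (2 * m + 1 + 1) → ι) =
          2 ^ m * m.factorial := by
      set w := dropEntry y p
      have hw : w.Injective := dropEntry_injective hy p
      have hp : y p ∉ Set.range w := notMem_range_dropEntry hy p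
      calc
        _ = ∑ r, ∑ τ : Perm (Fin (2 * m)), pairWeight A (m + 1)
              (Fin.cons (y p) (Fin.cons (w r) (dropEntry w r ∘ τ)) : Fin (2 * m + 1 + 1) → ι) :=
          sum_comp_perm_succ (fun z => pairWeight A (m + 1)
            (Fin.cons (y p) z : Fin (2 * m + 1 + 1) → ι)) w
        _ = ∑ r, (∏ k ∈ {r}ᶜ, (A (y p) (w k) * A (w r) (w k))⁻¹) * (2 ^ m * m.factorial) := by
          refine sum_congr rfl fun r _ => ?_
          have hpr : A (y p) (w r) ≠ 0 := hne _ _ fun h => hp ⟨r, h.symm⟩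
          rw [← ih (dropEntry_injective hw r), mul_sum]
          exact sum_congr rfl fun τ _ => pairWeight_cons_cons_dropEntry A w hpr τ
        _ = 2 ^ m * m.factorial := by
          rw [← sum_mul, hA.sum_prod_inv_eq_one hne (odd_two_mul_add_one m) hw hp, one_mul]
    calc
      _ = ∑ p, ∑ τ : Perm (Fin (2 * m + 1)),
            pairWeight A (m + 1) (Fin.cons (y p) (dropEntry y p ∘ τ) : Fin (2 * m + 1 + 1) → ι) :=
        sum_comp_perm_succ (fun z => pairWeight A (m + 1) z) y
      _ = 2 ^ (m + 1) * (m + 1).factorial := by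
        simp only [hfirst, sum_const, card_univ, Fintype.card_fin, nsmul_eq_mul, Nat.factorial_succ]
        push_cast
        ring

theorem sum_sign_mul_pairProd (hA : OddPartialFractions A) (hanti : ∀ i j, A i j = -A j i)
    (hne : ∀ i j, i ≠ j → A i j ≠ 0) (m : ℕ) {y : Fin (2 * m) → ι} (hy : y.Injective) :
    ∑ σ : Perm (Fin (2 * m)), ((Perm.sign σ : ℤ) : K) * pairProd A m (y ∘ σ) =
      2 ^ m * m.factorial * upperProd A y := by
  have hupper : upperProd A y ≠ 0 :=
    prod_ne_zero_iff.2 fun i _ => prod_ne_zero_iff.2 fun j hj =>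
      hne _ _ (hy.ne (mem_Ioi.1 hj).ne)
  rw [← sum_pairWeight_comp_perm hA hne m hy, sum_mul]
  refine sum_congr rfl fun σ _ => ?_
  rw [pairWeight, upperProd_comp_perm hanti]
  rcases Int.units_eq_one_or (Perm.sign σ) with hσ | hσ <;> simp [hσ] <;> field_simp

end Field

end PairSums

lemma pfaff_two_mul (m : ℕ) (A : Matrix (Fin (2 * m)) (Fin (2 * m)) ℂ) :
    pfaff (2 * m) A = (2 ^ m * (m.factorial : ℂ))⁻¹ *
      ∑ σ : Perm (Fin (2 * m)), ((Perm.sign σ : ℤ) : ℂ) * pairProd A m σ := by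
  have hm : 2 * m / 2 = m := by lia
  have hprod (σ : Perm (Fin (2 * m))) :
      ∏ i : Fin (2 * m / 2), A (σ ⟨2 * i, by lia⟩) (σ ⟨2 * i + 1, by lia⟩) = pairProd A m σ :=
    Fintype.prod_equiv (finCongr hm) _ _ fun _ => rfl
  simp only [pfaff, hprod]
  rw [one_div, hm]

theorem pfaff_eq_upperProd {m : ℕ} {A : Fin (2 * m) → Fin (2 * m) → ℂ}
    (hA : OddPartialFractions A) (hanti : ∀ i j, A i j = -A j i) (hne : ∀ i j, i ≠ j → A i j ≠ 0) :
    pfaff (2 * m) (Matrix.of A) = upperProd A id := by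
  have hfac : (2 ^ m * m.factorial : ℂ) ≠ 0 :=
    mul_ne_zero (pow_ne_zero m two_ne_zero) (Nat.cast_ne_zero.2 m.factorial_ne_zero)
  rw [pfaff_two_mul, inv_mul_eq_iff_eq_mul₀ hfac]
  exact sum_sign_mul_pairProd (y := id) hA hanti hne m Function.injective_id

section Liouville

lemma apply_zpow_mul {c ζ : ℂ} (hc : c ≠ 0) (hζ : ζ ≠ 0) {g : ℂ → ℂ}
    (hg : ∀ z ≠ 0, g (c * z) = ζ * g z) (l : ℤ) {z : ℂ} (hz : z ≠ 0) :
    g (c ^ l * z) = ζ ^ l * g z := by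
  have hstep (l : ℤ) : g (c ^ (l + 1) * z) = ζ * g (c ^ l * z) := by
    rw [← hg _ (mul_ne_zero (zpow_ne_zero l hc) hz), zpow_add_one₀ hc, mul_right_comm, mul_comm]
  induction l with
  | zero => simp
  | succ l ih => rw [hstep, ih, zpow_add_one₀ hζ]; ring
  | pred l ih =>
    have hpred := hstep (-l - 1)
    rw [sub_add_cancel, ih] at hpred
    rw [zpow_sub_one₀ hζ, mul_right_comm, hpred, mul_right_comm, mul_inv_cancel₀ hζ, one_mul]

variable {c ζ : ℂ}

lemma exists_zpow_mul_mem_annulus (hc0 : c ≠ 0) (hc1 : ‖c‖ < 1) {z : ℂ} (hz : z ≠ 0) :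
    ∃ l : ℤ, c ^ l * z ∈ Metric.closedBall 0 1 \ Metric.ball 0 ‖c‖ := by
  obtain ⟨n, hlo, hhi⟩ := exists_mem_Ioc_zpow (norm_pos_iff.2 hz)
    ((one_lt_inv₀ (norm_pos_iff.2 hc0)).2 hc1)
  have hc : 0 < ‖c‖ := norm_pos_iff.2 hc0
  refine ⟨n + 1, mem_closedBall_zero_iff.2 ?_, fun hmem => (mem_ball_zero_iff.1 hmem).not_ge ?_⟩ <;>
    rw [norm_mul, norm_zpow]
  · calc
      ‖c‖ ^ (n + 1) * ‖z‖ ≤ ‖c‖ ^ (n + 1) * ‖c‖⁻¹ ^ (n + 1) := by gcongr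
      _ = 1 := by rw [← mul_zpow, mul_inv_cancel₀ hc.ne', one_zpow]
  · calc
      ‖c‖ = ‖c‖ ^ (n + 1) * ‖c‖⁻¹ ^ n := by
        rw [zpow_add_one₀ hc.ne', inv_zpow', mul_right_comm, ← zpow_add₀ hc.ne', add_neg_cancel,
          zpow_zero, one_mul]
      _ ≤ ‖c‖ ^ (n + 1) * ‖z‖ := by gcongr

lemma exists_norm_le_of_apply_mul_eq (hc0 : c ≠ 0) (hc1 : ‖c‖ < 1) (hζ : ‖ζ‖ = 1) {g : ℂ → ℂ}
    (hg : ContinuousOn g {0}ᶜ) (hgc : ∀ z ≠ 0, g (c * z) = ζ * g z) :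
    ∃ C, ∀ z ≠ 0, ‖g z‖ ≤ C := by
  have hζ0 : ζ ≠ 0 := norm_ne_zero_iff.1 (hζ.trans_ne one_ne_zero)
  have hannulus : IsCompact (Metric.closedBall (0 : ℂ) 1 \ Metric.ball 0 ‖c‖) :=
    (isCompact_closedBall 0 1).diff Metric.isOpen_ball
  obtain ⟨C, hC⟩ := hannulus.exists_bound_of_continuousOn <| hg.mono fun z hz hz0 => by
    rw [Set.mem_singleton_iff.1 hz0] at hz
    exact hz.2 (Metric.mem_ball_self (norm_pos_iff.2 hc0))
  refine ⟨C, fun z hz => ?_⟩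
  obtain ⟨l, hl⟩ := exists_zpow_mul_mem_annulus hc0 hc1 hz
  simpa [apply_zpow_mul hc0 hζ0 hgc l hz, hζ] using hC _ hl

/-- `g ∘ exp` is a bounded entire function. -/
lemma eq_zero_of_apply_mul_eq (hc0 : c ≠ 0) (hc1 : ‖c‖ < 1) (hζ : ‖ζ‖ = 1) (hζ1 : ζ ≠ 1)
    {g : ℂ → ℂ} (hg : DifferentiableOn ℂ g {0}ᶜ) (hgc : ∀ z ≠ 0, g (c * z) = ζ * g z)
    {z : ℂ} (hz : z ≠ 0) : g z = 0 := by
  obtain ⟨C, hC⟩ := exists_norm_le_of_apply_mul_eq hc0 hc1 hζ hg.continuousOn hgc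
  have hentire : Differentiable ℂ (g ∘ Complex.exp) := fun s =>
    (hg.differentiableAt (isOpen_compl_singleton.mem_nhds (Complex.exp_ne_zero s))).comp s
      Complex.differentiableAt_exp
  have hbounded : Bornology.IsBounded (Set.range (g ∘ Complex.exp)) :=
    isBounded_iff_forall_norm_le.2
      ⟨C, Set.forall_mem_range.2 fun s => hC _ (Complex.exp_ne_zero s)⟩
  have hconst : g (c * z) = g z := by
    rw [← Complex.exp_log (mul_ne_zero hc0 hz), ← Complex.exp_log hz]
    exact hentire.apply_eq_apply_of_bounded hbounded _ _
  rw [hgc z hz] at hconst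
  by_contra hgz
  exact hζ1 ((mul_eq_right₀ hgz).1 hconst)

lemma meromorphicOrderAt_zpow_mul (hc : c ≠ 0) (hζ : ζ ≠ 0) {g : ℂ → ℂ}
    (hgc : ∀ z ≠ 0, g (c * z) = ζ * g z) (l : ℤ) {z : ℂ} (hz : z ≠ 0) :
    meromorphicOrderAt g (c ^ l * z) = meromorphicOrderAt g z := by
  have hderiv : deriv (c ^ l * ·) z ≠ 0 := by simp [zpow_ne_zero l hc]
  have hscale : g ∘ (c ^ l * ·) =ᶠ[𝓝[≠] z] (fun _ => ζ ^ l) * g := by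
    filter_upwards [nhdsWithin_le_nhds (isOpen_compl_singleton.mem_nhds hz)] with w hw
    exact apply_zpow_mul hc hζ hgc l hw
  rw [← meromorphicOrderAt_comp_of_deriv_ne_zero (by fun_prop) hderiv,
    meromorphicOrderAt_congr hscale,
    meromorphicOrderAt_mul_of_ne_zero analyticAt_const (zpow_ne_zero l hζ)]

theorem eq_zero_of_apply_mul_eq_of_meromorphicOrderAt_nonneg (hc0 : c ≠ 0) (hc1 : ‖c‖ < 1)
    (hζ : ‖ζ‖ = 1) (hζ1 : ζ ≠ 1) {g : ℂ → ℂ} (hg : MeromorphicOn g {0}ᶜ)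
    (hord : ∀ z ≠ 0, 0 ≤ meromorphicOrderAt g z) (hgc : ∀ z ≠ 0, g (c * z) = ζ * g z)
    {z : ℂ} (hz : z ≠ 0) (hcont : ContinuousAt g z) : g z = 0 := by
  set G := toMeromorphicNFOn g {0}ᶜ
  have hG : ∀ z ≠ 0, AnalyticAt ℂ G z :=
    fun z hz =>
    (meromorphicNFOn_toMeromorphicNFOn g _ hz).meromorphicOrderAt_nonneg_iff_analyticAt.1 <| by
      rw [meromorphicOrderAt_toMeromorphicNFOn hg hz]
      exact hord z hz
  have hlim : ∀ z ≠ 0, Tendsto g (𝓝[≠] z) (𝓝 (G z)) := fun z hz =>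
    ((hG z hz).continuousAt.tendsto.mono_left nhdsWithin_le_nhds).congr'
      (hg.toMeromorphicNFOn_eq_self_on_nhdsNE hz)
  have hGc : ∀ z ≠ 0, G (c * z) = ζ * G z := by
    intro z hz
    have hmul : Tendsto (c * ·) (𝓝[≠] z) (𝓝[≠] (c * z)) :=
      ((continuous_const_mul c).continuousWithinAt).tendsto_nhdsWithin fun w hw =>
        mt (mul_left_cancel₀ hc0) hw
    refine tendsto_nhds_unique ((hlim _ (mul_ne_zero hc0 hz)).comp hmul)
      (((hlim z hz).const_mul ζ).congr' ?_)
    filter_upwards [nhdsWithin_le_nhds (isOpen_compl_singleton.mem_nhds hz)] with w hw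
    exact (hgc w hw).symm
  rw [tendsto_nhds_unique (hcont.tendsto.mono_left nhdsWithin_le_nhds) (hlim z hz)]
  exact eq_zero_of_apply_mul_eq hc0 hc1 hζ hζ1
    (fun w hw => (hG w hw).differentiableAt.differentiableWithinAt) hGc hz

end Liouville

section Theta

variable {q : ℝ}

lemma norm_ofReal_lt_one (hq : |q| < 1) : ‖(q : ℂ)‖ < 1 := by
  rwa [Complex.norm_real, Real.norm_eq_abs]

lemma summable_norm_mul_pow (hq : |q| < 1) (a : ℂ) :
    Summable fun k : ℕ => ‖-(a * (q : ℂ) ^ k)‖ := by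
  simpa only [norm_neg, norm_mul, norm_pow] using
    (summable_geometric_of_lt_one (norm_nonneg _) (norm_ofReal_lt_one hq)).mul_left ‖a‖

lemma qPoch_eq_one_sub_mul (hq : |q| < 1) (a : ℂ) : qPoch q a = (1 - a) * qPoch q (a * q) := by
  have hmult : Multipliable fun k : ℕ => 1 - a * (q : ℂ) ^ (k + 1) := by
    simpa only [sub_eq_add_neg, pow_succ', mul_assoc] using
      multipliable_one_add_of_summable (summable_norm_mul_pow hq (a * q))
  have hsplit := tprod_eq_zero_mul' (f := fun k : ℕ => 1 - a * (q : ℂ) ^ k) hmult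
  simpa only [qPoch, pow_zero, mul_one, pow_succ', ← mul_assoc] using hsplit

lemma exists_mul_pow_eq_one_of_qPoch_eq_zero (hq : |q| < 1) {a : ℂ} (ha : qPoch q a = 0) :
    ∃ k : ℕ, a * (q : ℂ) ^ k = 1 := by
  by_contra! hne
  refine tprod_one_add_ne_zero_of_summable (fun k => ?_) (summable_norm_mul_pow hq a) ?_
  · rw [← sub_eq_add_neg]
    exact sub_ne_zero.2 (hne k).symm
  · simpa only [qPoch, sub_eq_add_neg] using ha

lemma differentiable_qPoch (hq : |q| < 1) : Differentiable ℂ (qPoch q) := by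
  intro a
  have hball : IsOpen (Metric.ball (0 : ℂ) (‖a‖ + 1)) := Metric.isOpen_ball
  have hprod : HasProdLocallyUniformlyOn (fun (k : ℕ) (z : ℂ) => 1 + -(z * (q : ℂ) ^ k))
      (fun z => ∏' k : ℕ, (1 + -(z * (q : ℂ) ^ k))) (Metric.ball 0 (‖a‖ + 1)) := by
    refine Summable.hasProdLocallyUniformlyOn_nat_one_add hball
      ((summable_geometric_of_lt_one (norm_nonneg _) (norm_ofReal_lt_one hq)).mul_left (‖a‖ + 1))
      (.of_forall fun k z hz => ?_) fun k => by fun_prop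
    rw [norm_neg, norm_mul, norm_pow]
    gcongr
    exact (mem_ball_zero_iff.1 hz).le
  have hdiff := hprod.differentiableOn
    (.of_forall fun s => by
      simpa [Finset.prod_fn] using DifferentiableOn.finsetProd (fun _ _ => by fun_prop)) hball
  have hqPoch : qPoch q = fun z => ∏' k : ℕ, (1 + -(z * (q : ℂ) ^ k)) := by
    simp only [funext_iff, qPoch, sub_eq_add_neg, implies_true]
  rw [hqPoch]
  exact hdiff.differentiableAt (hball.mem_nhds (mem_ball_zero_iff.2 (lt_add_one _)))

lemma theta_mul_left (hq0 : q ≠ 0) (hq : |q| < 1) {z : ℂ} (hz : z ≠ 0) :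
    theta q (q * z) = -theta q z / z := by
  have hqc : (q : ℂ) ≠ 0 := Complex.ofReal_ne_zero.2 hq0
  rw [theta, theta, qPoch_eq_one_sub_mul hq z, show (q : ℂ) / (q * z) = z⁻¹ by field_simp,
    qPoch_eq_one_sub_mul hq z⁻¹, mul_comm (q : ℂ) z, inv_mul_eq_div]
  field_simp
  ring

lemma theta_inv (hq : |q| < 1) {z : ℂ} (hz : z ≠ 0) : theta q z⁻¹ = -theta q z / z := by
  rw [theta, theta, qPoch_eq_one_sub_mul hq z, qPoch_eq_one_sub_mul hq z⁻¹, div_inv_eq_mul,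
    mul_comm (q : ℂ) z, inv_mul_eq_div]
  field_simp
  ring

lemma exists_zpow_eq_of_theta_eq_zero (hq0 : q ≠ 0) (hq : |q| < 1) {z : ℂ} (hz : theta q z = 0) :
    ∃ l : ℤ, z = (q : ℂ) ^ l := by
  rcases mul_eq_zero.1 hz with hz | hz
  · obtain ⟨k, hk⟩ := exists_mul_pow_eq_one_of_qPoch_eq_zero hq hz
    exact ⟨-k, by rw [zpow_neg, zpow_natCast, eq_inv_of_mul_eq_one_left hk]⟩
  · obtain ⟨k, hk⟩ := exists_mul_pow_eq_one_of_qPoch_eq_zero hq hz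
    refine ⟨k + 1, ?_⟩
    have hz0 : z ≠ 0 := by rintro rfl; simp at hk
    rw [zpow_add_one₀ (Complex.ofReal_ne_zero.2 hq0), zpow_natCast]
    field_simp at hk
    rw [← hk, mul_comm]

lemma theta_neg_one_ne_zero (hq0 : q ≠ 0) (hq : |q| < 1) : theta q (-1) ≠ 0 := by
  intro h
  obtain ⟨l, hl⟩ := exists_zpow_eq_of_theta_eq_zero hq0 hq h
  have hnorm : ‖(q : ℂ)‖ ^ l = 1 := by rw [← norm_zpow, ← hl, norm_neg, norm_one]
  obtain rfl : l = 0 := (zpow_eq_one_iff_right₀ (norm_nonneg _) (norm_ofReal_lt_one hq).ne).1 hnorm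
  norm_num at hl

lemma analyticAt_theta (hq : |q| < 1) {z : ℂ} (hz : z ≠ 0) : AnalyticAt ℂ (theta q) z := by
  refine DifferentiableOn.analyticAt (s := {0}ᶜ) (fun w hw => ?_)
    (isOpen_compl_singleton.mem_nhds hz)
  have hdiv : DifferentiableAt ℂ (fun w : ℂ => (q : ℂ) / w) w :=
    (differentiableAt_const _).div differentiableAt_fun_id hw
  exact ((differentiable_qPoch hq w).mul
    ((differentiable_qPoch hq _).comp w hdiv)).differentiableWithinAt

lemma theta_one (hq : |q| < 1) : theta q 1 = 0 := by
  rw [theta, qPoch_eq_one_sub_mul hq, sub_self, zero_mul, zero_mul]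

lemma deriv_theta_one_ne_zero (hq : |q| < 1) : deriv (theta q) 1 ≠ 0 := by
  have hcofactor : DifferentiableAt ℂ (fun z : ℂ => qPoch q (z * q) * qPoch q (q / z)) 1 :=
    ((differentiable_qPoch hq _).comp (1 : ℂ) (by fun_prop)).mul
      ((differentiable_qPoch hq _).comp (1 : ℂ) (by fun_prop (disch := simp)))
  have hqPoch : qPoch q q ≠ 0 := by
    intro h
    obtain ⟨k, hk⟩ := exists_mul_pow_eq_one_of_qPoch_eq_zero hq h
    have hnorm : ‖(q : ℂ)‖ ^ (k + 1) = 1 := by rw [← norm_pow, pow_succ', hk, norm_one]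
    exact (pow_lt_one₀ (norm_nonneg _) (norm_ofReal_lt_one hq) k.succ_ne_zero).ne hnorm
  have hfactor : theta q = fun z => (1 - z) * (qPoch q (z * q) * qPoch q (q / z)) := by
    ext z
    rw [theta, qPoch_eq_one_sub_mul hq z, mul_assoc]
  have hderiv := ((hasDerivAt_id' (1 : ℂ)).const_sub 1).fun_mul hcofactor.hasDerivAt
  rw [hfactor, hderiv.deriv]
  simpa using hqPoch

/-- The function `z ↦ θ(z;q) / θ(-z;q)`, whose values at the quotients of the variables are the
entries of the elliptic pfaffian. -/
noncomputable def thetaRatio (q : ℝ) (z : ℂ) : ℂ := theta q z / theta q (-z)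

lemma thetaRatio_neg (z : ℂ) : thetaRatio q (-z) = (thetaRatio q z)⁻¹ := by
  rw [thetaRatio, thetaRatio, neg_neg, inv_div]

lemma thetaRatio_inv (hq : |q| < 1) {z : ℂ} (hz : z ≠ 0) :
    thetaRatio q z⁻¹ = -thetaRatio q z := by
  rw [thetaRatio, thetaRatio, ← inv_neg, theta_inv hq hz, theta_inv hq (neg_ne_zero.2 hz),
    neg_div_neg_eq, div_div_div_cancel_right₀ hz, neg_div]

lemma thetaRatio_mul_left (hq0 : q ≠ 0) (hq : |q| < 1) {z : ℂ} (hz : z ≠ 0) :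
    thetaRatio q (q * z) = -thetaRatio q z := by
  rw [thetaRatio, thetaRatio, ← mul_neg, theta_mul_left hq0 hq hz,
    theta_mul_left hq0 hq (neg_ne_zero.2 hz), neg_div_neg_eq, div_div_div_cancel_right₀ hz, neg_div]

end Theta

section PartialFractions

variable {q : ℝ}

lemma analyticAt_theta_neg (hq : |q| < 1) {z : ℂ} (hz : z ≠ 0) :
    AnalyticAt ℂ (fun w => theta q (-w)) z :=
  (analyticAt_theta hq (neg_ne_zero.2 hz)).fun_comp analyticAt_id.neg

lemma analyticAt_thetaRatio (hq : |q| < 1) {z : ℂ} (hz : z ≠ 0) (hpole : theta q (-z) ≠ 0) :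
    AnalyticAt ℂ (thetaRatio q) z :=
  (analyticAt_theta hq hz).fun_div (analyticAt_theta_neg hq hz) hpole

lemma meromorphicAt_thetaRatio (hq : |q| < 1) {z : ℂ} (hz : z ≠ 0) :
    MeromorphicAt (thetaRatio q) z :=
  (analyticAt_theta hq hz).meromorphicAt.fun_div (analyticAt_theta_neg hq hz).meromorphicAt

lemma meromorphicOrderAt_theta_one (hq : |q| < 1) : meromorphicOrderAt (theta q) 1 = 1 := by
  have han := analyticAt_theta hq one_ne_zero
  rw [han.meromorphicOrderAt_eq,
    han.analyticOrderAt_eq_one_of_zero_deriv_ne_zero (theta_one hq) (deriv_theta_one_ne_zero hq)]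
  rfl

lemma neg_one_le_meromorphicOrderAt_thetaRatio (hq : |q| < 1) :
    -1 ≤ meromorphicOrderAt (thetaRatio q) (-1) := by
  have hone : (-1 : ℂ) ≠ 0 := neg_ne_zero.2 one_ne_zero
  have hnum := analyticAt_theta hq hone
  have hden : meromorphicOrderAt (fun w => theta q (-w)) (-1) = 1 := by
    have hcomp := meromorphicOrderAt_comp_of_deriv_ne_zero (f := theta q) (x := (-1 : ℂ))
      analyticAt_id.neg (by simp)
    rwa [Pi.neg_apply, id, neg_neg, meromorphicOrderAt_theta_one hq] at hcomp
  unfold thetaRatio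
  rw [fun_meromorphicOrderAt_div hnum.meromorphicAt (analyticAt_theta_neg hq hone).meromorphicAt,
    hden, sub_eq_add_neg]
  exact le_add_of_nonneg_left hnum.meromorphicOrderAt_nonneg

lemma meromorphicOrderAt_mul_nonneg_of_simple_pole {f g : ℂ → ℂ} {z : ℂ} (hf : MeromorphicAt f z)
    (hpole : -1 ≤ meromorphicOrderAt f z) (hg : AnalyticAt ℂ g z) (hgz : g z = 0) :
    0 ≤ meromorphicOrderAt (fun w => f w * g w) z := by
  have hlim : Tendsto g (𝓝[≠] z) (𝓝 0) := hgz ▸ hg.continuousAt.tendsto.mono_left nhdsWithin_le_nhds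
  have hzero : 1 ≤ meromorphicOrderAt g z := by
    have hpos := (tendsto_zero_iff_meromorphicOrderAt_pos hg.meromorphicAt).1 hlim
    revert hpos
    cases meromorphicOrderAt g z with
    | top => simp
    | coe n => exact_mod_cast Int.add_one_le_of_lt
  rw [fun_meromorphicOrderAt_mul hf hg.meromorphicAt]
  exact (by rfl : (0 : WithTop ℤ) = -1 + 1).trans_le (add_le_add hpole hzero)

variable {ι : Type*} [Fintype ι] [DecidableEq ι] {x : ι → ℂ}

/-- The difference of the two sides of the partial fraction expansion of
`∏ j, thetaRatio q (x j * t)`, as a function of `t`. -/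
noncomputable def partialFractionDefect (q : ℝ) (x : ι → ℂ) (t : ℂ) : ℂ :=
  ∏ j, thetaRatio q (x j * t) -
    ∑ j, thetaRatio q (x j * t) * ∏ k ∈ {j}ᶜ, thetaRatio q (-(x k / x j))

lemma partialFractionDefect_mul_left (hq0 : q ≠ 0) (hq : |q| < 1) (hι : Odd (Fintype.card ι))
    (hx0 : ∀ i, x i ≠ 0) {t : ℂ} (ht : t ≠ 0) :
    partialFractionDefect q x (q * t) = -partialFractionDefect q x t := by
  have hterm (j : ι) : thetaRatio q (x j * (q * t)) = -thetaRatio q (x j * t) := by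
    rw [mul_left_comm, thetaRatio_mul_left hq0 hq (mul_ne_zero (hx0 j) ht)]
  simp only [partialFractionDefect, hterm, prod_neg, card_univ, hι.neg_one_pow, neg_mul,
    sum_neg_distrib, one_mul]
  ring

lemma meromorphicAt_partialFractionDefect (hq : |q| < 1) (hx0 : ∀ i, x i ≠ 0) {t : ℂ}
    (ht : t ≠ 0) : MeromorphicAt (partialFractionDefect q x) t := by
  have hterm (j : ι) : MeromorphicAt (fun t => thetaRatio q (x j * t)) t :=
    (meromorphicAt_thetaRatio hq (mul_ne_zero (hx0 j) ht)).comp_analyticAt (by fun_prop)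
  unfold partialFractionDefect
  fun_prop

lemma analyticAt_partialFractionDefect (hq : |q| < 1) (hx0 : ∀ i, x i ≠ 0) {t : ℂ}
    (ht : t ≠ 0) (hpole : ∀ j, theta q (-(x j * t)) ≠ 0) :
    AnalyticAt ℂ (partialFractionDefect q x) t := by
  have hterm (j : ι) : AnalyticAt ℂ (fun t => thetaRatio q (x j * t)) t :=
    (analyticAt_thetaRatio hq (mul_ne_zero (hx0 j) ht) (hpole j)).fun_comp (by fun_prop)
  unfold partialFractionDefect
  fun_prop

lemma partialFractionDefect_eq (q : ℝ) (x : ι → ℂ) (j : ι) :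
    partialFractionDefect q x = fun t =>
      thetaRatio q (x j * t) *
          (∏ k ∈ {j}ᶜ, thetaRatio q (x k * t) - ∏ k ∈ {j}ᶜ, thetaRatio q (-(x k / x j))) +
        -∑ i ∈ {j}ᶜ, thetaRatio q (x i * t) * ∏ k ∈ {i}ᶜ, thetaRatio q (-(x k / x i)) := by
  ext t
  rw [partialFractionDefect, Fintype.prod_eq_mul_prod_compl j, Fintype.sum_eq_add_sum_compl j]
  ring

lemma meromorphicOrderAt_partialFractionDefect_nonneg_of_pole (hq : |q| < 1) (hx0 : ∀ i, x i ≠ 0)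
    (hx : ∀ j k, j ≠ k → theta q (x k / x j) ≠ 0) (j : ι) :
    0 ≤ meromorphicOrderAt (partialFractionDefect q x) (-(x j)⁻¹) := by
  set t₀ := -(x j)⁻¹
  have ht₀ : t₀ ≠ 0 := neg_ne_zero.2 (inv_ne_zero (hx0 j))
  have hxt₀ (k : ι) : x k * t₀ = -(x k / x j) := by rw [mul_neg, div_eq_mul_inv]
  have hjt₀ : x j * t₀ = -1 := by rw [hxt₀, div_self (hx0 j)]
  have hreg : ∀ k ∈ ({j}ᶜ : Finset ι), AnalyticAt ℂ (fun t => thetaRatio q (x k * t)) t₀ := by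
    intro k hk
    refine (analyticAt_thetaRatio hq (mul_ne_zero (hx0 k) ht₀) ?_).fun_comp (by fun_prop)
    rw [hxt₀, neg_neg]
    exact hx j k (by simpa [eq_comm] using hk)
  have hpole : -1 ≤ meromorphicOrderAt (fun t => thetaRatio q (x j * t)) t₀ := by
    have hcomp := meromorphicOrderAt_comp_of_deriv_ne_zero (f := thetaRatio q) (x := t₀)
      (g := (x j * ·)) (by fun_prop) (by simpa using hx0 j)
    rw [← Function.comp_def, hcomp, hjt₀]
    exact neg_one_le_meromorphicOrderAt_thetaRatio hq
  have hpole' : MeromorphicAt (fun t => thetaRatio q (x j * t)) t₀ :=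
    (meromorphicAt_thetaRatio hq (mul_ne_zero (hx0 j) ht₀)).comp_analyticAt (by fun_prop)
  set B : ℂ → ℂ := fun t =>
    ∏ k ∈ {j}ᶜ, thetaRatio q (x k * t) - ∏ k ∈ {j}ᶜ, thetaRatio q (-(x k / x j))
  have hB : AnalyticAt ℂ B t₀ := (Finset.analyticAt_fun_prod _ hreg).sub analyticAt_const
  have hB₀ : B t₀ = 0 := by simp only [B, hxt₀, sub_self]
  have hR : AnalyticAt ℂ
      (fun t => -∑ i ∈ {j}ᶜ, thetaRatio q (x i * t) * ∏ k ∈ {i}ᶜ, thetaRatio q (-(x k / x i))) t₀ :=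
    (Finset.analyticAt_fun_sum _ fun i hi => (hreg i hi).mul analyticAt_const).neg
  rw [partialFractionDefect_eq q x j]
  refine le_trans (le_min ?_ hR.meromorphicOrderAt_nonneg)
    (meromorphicOrderAt_add (hpole'.fun_mul hB.meromorphicAt) hR.meromorphicAt)
  exact meromorphicOrderAt_mul_nonneg_of_simple_pole hpole' hpole hB hB₀

lemma meromorphicOrderAt_partialFractionDefect_nonneg (hq0 : q ≠ 0) (hq : |q| < 1)
    (hι : Odd (Fintype.card ι)) (hx0 : ∀ i, x i ≠ 0)
    (hx : ∀ j k, j ≠ k → theta q (x k / x j) ≠ 0) {t : ℂ} (ht : t ≠ 0) :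
    0 ≤ meromorphicOrderAt (partialFractionDefect q x) t := by
  by_cases hpole : ∀ j, theta q (-(x j * t)) ≠ 0
  · exact (analyticAt_partialFractionDefect hq hx0 ht hpole).meromorphicOrderAt_nonneg
  push Not at hpole
  obtain ⟨j, hj⟩ := hpole
  obtain ⟨l, hl⟩ := exists_zpow_eq_of_theta_eq_zero hq0 hq hj
  have htj : t = (q : ℂ) ^ l * -(x j)⁻¹ := by
    rw [← hl, neg_mul_neg, mul_right_comm, mul_inv_cancel₀ (hx0 j), one_mul]
  rw [htj, meromorphicOrderAt_zpow_mul (ζ := -1) (Complex.ofReal_ne_zero.2 hq0) (by simp)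
    (fun z hz => by rw [partialFractionDefect_mul_left hq0 hq hι hx0 hz, neg_one_mul]) l
    (neg_ne_zero.2 (inv_ne_zero (hx0 j)))]
  exact meromorphicOrderAt_partialFractionDefect_nonneg_of_pole hq hx0 hx j

theorem prod_thetaRatio_eq_sum (hq0 : q ≠ 0) (hq : |q| < 1)
    (hι : Odd (Fintype.card ι)) (hx0 : ∀ i, x i ≠ 0)
    (hx : ∀ j k, j ≠ k → theta q (x k / x j) ≠ 0) {t : ℂ} (ht : t ≠ 0)
    (hpole : ∀ j, theta q (-(x j * t)) ≠ 0) :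
    ∏ j, thetaRatio q (x j * t) =
      ∑ j, thetaRatio q (x j * t) * ∏ k ∈ {j}ᶜ, thetaRatio q (-(x k / x j)) := by
  refine sub_eq_zero.1 (eq_zero_of_apply_mul_eq_of_meromorphicOrderAt_nonneg (ζ := -1)
    (Complex.ofReal_ne_zero.2 hq0) (norm_ofReal_lt_one hq) (by simp) (by norm_num)
    (fun z hz => meromorphicAt_partialFractionDefect hq hx0 hz)
    (fun z hz => meromorphicOrderAt_partialFractionDefect_nonneg hq0 hq hι hx0 hx hz)
    (fun z hz => by rw [partialFractionDefect_mul_left hq0 hq hι hx0 hz, neg_one_mul]) ht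
    (analyticAt_partialFractionDefect hq hx0 ht hpole).continuousAt)

end PartialFractions

section Evaluation

variable {q : ℝ} {ι : Type*} {x : ι → ℂ}

lemma oddPartialFractions_thetaRatio (hq0 : q ≠ 0) (hq : |q| < 1) (hx0 : ∀ i, x i ≠ 0)
    (hx : ∀ i j, i ≠ j → theta q (x j / x i) ≠ 0)
    (hneg : ∀ i j, i ≠ j → theta q (-(x j / x i)) ≠ 0) :
    OddPartialFractions fun i j => thetaRatio q (x j / x i) := by
  intro n w p hn hw hp
  have hpartial := prod_thetaRatio_eq_sum (x := x ∘ w) (t := (x p)⁻¹) hq0 hq (by simpa using hn)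
    (fun i => hx0 _) (fun j k hjk => hx _ _ (hw.ne hjk)) (inv_ne_zero (hx0 p))
    fun j => hneg p (w j) fun h => hp ⟨j, h.symm⟩
  simpa only [Function.comp_apply, ← div_eq_mul_inv, thetaRatio_neg] using hpartial

lemma thetaRatio_div_antisymm (hq : |q| < 1) (hx0 : ∀ i, x i ≠ 0) (i j : ι) :
    thetaRatio q (x j / x i) = -thetaRatio q (x i / x j) := by
  rw [← thetaRatio_inv hq (div_ne_zero (hx0 i) (hx0 j)), inv_div]

lemma pfaff_thetaRatio_of_theta_ne_zero (hq0 : q ≠ 0) (hq : |q| < 1) {m : ℕ} {x : Fin (2 * m) → ℂ}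
    (hx0 : ∀ i, x i ≠ 0) (hx : ∀ i j, i ≠ j → theta q (x j / x i) ≠ 0)
    (hneg : ∀ i j, i ≠ j → theta q (-(x j / x i)) ≠ 0) :
    pfaff (2 * m) (Matrix.of fun i j => thetaRatio q (x j / x i)) =
      ∏ i, ∏ j ∈ Ioi i, thetaRatio q (x j / x i) :=
  pfaff_eq_upperProd (oddPartialFractions_thetaRatio hq0 hq hx0 hx hneg)
    (thetaRatio_div_antisymm hq hx0)
    fun i j hij => div_ne_zero (hx i j hij) (hneg i j hij)

lemma continuous_pfaff (n : ℕ) : Continuous (pfaff n) := by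
  unfold pfaff
  fun_prop

lemma eventually_theta_mul_exp_ne_zero (hq0 : q ≠ 0) (hq : |q| < 1) {c k : ℂ} (hc : c ≠ 0)
    (hk : k ≠ 0) : ∀ᶠ s in 𝓝[≠] 0, theta q (c * Complex.exp (k * s)) ≠ 0 := by
  have han : AnalyticOnNhd ℂ (fun s => theta q (c * Complex.exp (k * s))) Set.univ := fun s _ =>
    (analyticAt_theta hq (mul_ne_zero hc (Complex.exp_ne_zero (k * s)))).fun_comp
      (f := fun s => c * Complex.exp (k * s)) (by fun_prop)
  refine (han 0 trivial).eventually_eq_zero_or_eventually_ne_zero.resolve_left fun hzero => ?_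
  refine theta_neg_one_ne_zero hq0 hq ?_
  have hs := han.eqOn_zero_of_preconnected_of_eventuallyEq_zero isPreconnected_univ trivial hzero
    (Set.mem_univ (Complex.log (-c⁻¹) / k))
  simpa [mul_div_cancel₀ _ hk, Complex.exp_log, hc, mul_div_cancel_left₀] using hs

lemma continuousAt_thetaRatio_mul_exp (hq : |q| < 1) {c : ℂ} (hc : c ≠ 0) (hpole : theta q (-c) ≠ 0)
    (k : ℂ) : ContinuousAt (fun s => thetaRatio q (c * Complex.exp (k * s))) 0 :=
  ContinuousAt.comp' (g := thetaRatio q)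
    (by simpa using (analyticAt_thetaRatio hq hc hpole).continuousAt) (by fun_prop)

/-- A holomorphic family of sequences through `x` at `s = 0`, in which all quotients of two entries
vary with `s`. It is used to move the quotients off the zeros of `theta q`. -/
noncomputable def expPerturb {n : ℕ} (x : Fin n → ℂ) (s : ℂ) (i : Fin n) : ℂ :=
  x i * Complex.exp (i * s)

lemma expPerturb_zero {n : ℕ} (x : Fin n → ℂ) : expPerturb x 0 = x := by
  ext i
  simp [expPerturb]

lemma expPerturb_ne_zero {n : ℕ} {x : Fin n → ℂ} (hx0 : ∀ i, x i ≠ 0) (s : ℂ) (i : Fin n) :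
    expPerturb x s i ≠ 0 :=
  mul_ne_zero (hx0 i) (Complex.exp_ne_zero _)

lemma expPerturb_div_expPerturb {n : ℕ} (x : Fin n → ℂ) (s : ℂ) (i j : Fin n) :
    expPerturb x s j / expPerturb x s i = x j / x i * Complex.exp ((j - i) * s) := by
  rw [expPerturb, expPerturb, mul_div_mul_comm, ← Complex.exp_sub, sub_mul]

lemma eventually_theta_expPerturb_ne_zero (hq0 : q ≠ 0) (hq : |q| < 1) {n : ℕ} {x : Fin n → ℂ}
    (hx0 : ∀ i, x i ≠ 0) :
    ∀ᶠ s in 𝓝[≠] (0 : ℂ), ∀ i j, i ≠ j → theta q (expPerturb x s j / expPerturb x s i) ≠ 0 ∧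
      theta q (-(expPerturb x s j / expPerturb x s i)) ≠ 0 := by
  simp only [eventually_all, expPerturb_div_expPerturb, ← neg_mul]
  intro i j hij
  have hk : (j : ℂ) - (i : ℂ) ≠ 0 :=
    sub_ne_zero.2 (Nat.cast_injective.ne (Fin.val_ne_of_ne hij.symm))
  have hquot : x j / x i ≠ 0 := div_ne_zero (hx0 j) (hx0 i)
  exact (eventually_theta_mul_exp_ne_zero hq0 hq hquot hk).and
    (eventually_theta_mul_exp_ne_zero hq0 hq (neg_ne_zero.2 hquot) hk)

lemma continuousAt_thetaRatio_expPerturb (hq0 : q ≠ 0) (hq : |q| < 1) {n : ℕ} {x : Fin n → ℂ}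
    (hx0 : ∀ i, x i ≠ 0) (hneg : ∀ i j, i ≠ j → theta q (-(x j / x i)) ≠ 0) (i j : Fin n) :
    ContinuousAt (fun s => thetaRatio q (expPerturb x s j / expPerturb x s i)) 0 := by
  simp only [expPerturb_div_expPerturb]
  refine continuousAt_thetaRatio_mul_exp hq (div_ne_zero (hx0 j) (hx0 i)) ?_ _
  obtain rfl | hij := eq_or_ne i j
  · rw [div_self (hx0 i)]
    exact theta_neg_one_ne_zero hq0 hq
  · exact hneg i j hij

theorem pfaff_thetaRatio (hq0 : q ≠ 0) (hq : |q| < 1) {m : ℕ} {x : Fin (2 * m) → ℂ}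
    (hx0 : ∀ i, x i ≠ 0) (hneg : ∀ i j, i ≠ j → theta q (-(x j / x i)) ≠ 0) :
    pfaff (2 * m) (Matrix.of fun i j => thetaRatio q (x j / x i)) =
      ∏ i, ∏ j ∈ Ioi i, thetaRatio q (x j / x i) := by
  set entry : ℂ → Fin (2 * m) → Fin (2 * m) → ℂ := fun s i j =>
    thetaRatio q (expPerturb x s j / expPerturb x s i) with hentry
  have hcont (i j : Fin (2 * m)) : ContinuousAt (fun s => entry s i j) 0 :=
    continuousAt_thetaRatio_expPerturb hq0 hq hx0 hneg i j
  have hpfaff : ContinuousAt (fun s => pfaff (2 * m) (Matrix.of (entry s))) 0 :=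
    (continuous_pfaff _).continuousAt.comp
      (continuousAt_pi.2 fun i => continuousAt_pi.2 fun j => hcont i j)
  have hprod : ContinuousAt (fun s => ∏ i, ∏ j ∈ Ioi i, entry s i j) 0 := by fun_prop
  have hgeneric : (fun s => pfaff (2 * m) (Matrix.of (entry s))) =ᶠ[𝓝[≠] 0]
      fun s => ∏ i, ∏ j ∈ Ioi i, entry s i j :=
    (eventually_theta_expPerturb_ne_zero hq0 hq hx0).mono fun s hs =>
      pfaff_thetaRatio_of_theta_ne_zero hq0 hq (expPerturb_ne_zero hx0 s)
        (fun i j hij => (hs i j hij).1) fun i j hij => (hs i j hij).2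
  simpa only [hentry, expPerturb_zero] using
    ((hpfaff.eventuallyEq_nhds_iff_eventuallyEq_nhdsNE hprod).1 hgeneric).eq_of_nhds

theorem elliptic_pfaffian_even_general (q : ℝ) (hq0 : q ≠ 0) (hq1 : |q| < 1) (m : ℕ)
    (x : Fin (2 * m) → ℂ) (hx0 : ∀ i, x i ≠ 0)
    (hθ : ∀ i j, i ≠ j → ∀ l : ℤ, x j / x i ≠ -(q : ℂ) ^ l) :
    pfaff (2 * m) (Matrix.of fun i j => theta q (x j / x i) / theta q (-(x j / x i))) =
      ∏ i : Fin (2 * m), ∏ j ∈ Finset.Ioi i,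
        theta q (x j / x i) / theta q (-(x j / x i)) := by
  refine pfaff_thetaRatio hq0 hq1 hx0 fun i j hij hzero => ?_
  obtain ⟨l, hl⟩ := exists_zpow_eq_of_theta_eq_zero hq0 hq1 hzero
  exact hθ i j hij l (neg_eq_iff_eq_neg.1 hl)

end Evaluation

/-- The even elliptic pfaffian evaluation:
`pfaff(θ(x_j/x_i)/θ(−x_j/x_i)) = Π_{i<j} θ(x_j/x_i)/θ(−x_j/x_i)` for `2m` variables. -/
theorem elliptic_pfaffian_even (q : ℝ) (hq0 : 0 < q) (hq1 : q < 1) (m : ℕ) (hm : 1 ≤ m)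
    (x : Fin (2 * m) → ℂ) (hx0 : ∀ i, x i ≠ 0)
    (hθ : ∀ i j, i ≠ j → ∀ l : ℤ, x j / x i ≠ -(q : ℂ) ^ l) :
    pfaff (2 * m) (Matrix.of fun i j => theta q (x j / x i) / theta q (-(x j / x i))) =
      ∏ i : Fin (2 * m), ∏ j ∈ Finset.Ioi i,
        theta q (x j / x i) / theta q (-(x j / x i)) :=
  elliptic_pfaffian_even_general q hq0.ne' (by rwa [abs_of_pos hq0]) m x hx0 hθ
end

section
/- Let m ≥ 1 and put M = ⌊m/2⌋. Let (a_{ij})_{1≤i,j≤m} be an arbitrary complex matrix and let (b_{ij})_{1≤i,j≤m} be a skew-symmetric complex matrix. Then pfaff_{1≤i,j≤m}(a_{ij} − a_{ji} + b_{ij}) = (1/M!) · Σ_{s=0}^{M} 2^{s−M} · binom(M,s) · Σ_{σ∈S_m} sgn(σ) · Π_{i=1}^{s} a_{σ(2i−1),σ(2i)} · Π_{i=s+1}^{M} b_{σ(2i−1),σ(2i)}. -/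
/-!
The alternating sum over `σ` of `∏ i, C i (σ (f (inl i))) (σ (f (inr i)))` is multilinear in the
family of matrices `C`, and permuting the positions `f` multiplies it by the sign of the
permutation. Transposing one `C i` therefore negates it, so a factor `A - Aᵀ` counts as `2 • A`.
Permuting whole pairs does not change it, since such a permutation acts in the same way on the
first and on the second entries and hence is even; so, when every factor is `A` or `B`, only the
number of factors `A` matters. The binomial coefficients count the ways to choose the factors
`A - Aᵀ` in the multilinear expansion with all factors `(A - Aᵀ) + B`.
-/

open Equiv Finset Matrix

section PairingSum

variable {R n ι : Type*} [CommRing R] [Fintype n] [DecidableEq n] [Fintype ι]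

/-- The unnormalised pfaffian-type alternating sum, as a multilinear map in a family of matrices
indexed by pairs of positions. The positions of the pair `i` are `f (inl i)` and `f (inr i)`. -/
def pairingSum (f : ι ⊕ ι ↪ n) : MultilinearMap R (fun _ : ι => Matrix n n R) R :=
  ∑ σ : Perm n, Perm.sign σ • (MultilinearMap.mkPiAlgebra R ι R).compLinearMap
    fun i => entryLinearMap R R (σ (f (.inl i))) (σ (f (.inr i)))

lemma pairingSum_apply (f : ι ⊕ ι ↪ n) (C : ι → Matrix n n R) :
    pairingSum f C =
      ∑ σ : Perm n, ((Perm.sign σ : ℤ) : R) * ∏ i, C i (σ (f (.inl i))) (σ (f (.inr i))) := by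
  simp [pairingSum, Units.smul_def]

lemma pairingSum_perm_trans [DecidableEq ι] (f : ι ⊕ ι ↪ n) (τ : Perm (ι ⊕ ι))
    (C : ι → Matrix n n R) :
    pairingSum (τ.toEmbedding.trans f) C = ((Perm.sign τ : ℤ) : R) * pairingSum f C := by
  let τ' : Perm n := τ.viaFintypeEmbedding f
  have sign_τ' : Perm.sign τ' = Perm.sign τ := τ.viaFintypeEmbedding_sign f
  have τ'_apply (x : ι ⊕ ι) : τ' (f x) = f (τ x) := τ.viaFintypeEmbedding_apply_image f x
  symm
  rw [pairingSum_apply, pairingSum_apply, ← Equiv.sum_comp (Equiv.mulRight τ'), mul_sum]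
  refine sum_congr rfl fun σ _ => ?_
  simp only [coe_mulRight, Perm.mul_apply, Perm.sign_mul, sign_τ', τ'_apply,
    Function.Embedding.trans_apply, coe_toEmbedding]
  rw [mul_comm (Perm.sign σ), ← mul_assoc, ← Int.cast_mul, ← Units.val_mul, ← mul_assoc,
    Int.units_mul_self, one_mul]

lemma pairingSum_comp_perm (f : ι ⊕ ι ↪ n) (π : Perm ι) (C : ι → Matrix n n R) :
    pairingSum f (fun i => C (π i)) = pairingSum f C := by
  classical
  calc pairingSum f (fun i => C (π i))
    _ = pairingSum ((Perm.sumCongr π π).toEmbedding.trans f) (fun i => C (π i)) := by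
      rw [pairingSum_perm_trans, Perm.sign_sumCongr, Int.units_mul_self, Units.val_one,
        Int.cast_one, one_mul]
    _ = pairingSum f C := by
      rw [pairingSum_apply, pairingSum_apply]
      exact sum_congr rfl fun σ _ => congrArg _ <|
        Equiv.prod_comp π fun i => C i (σ (f (.inl i))) (σ (f (.inr i)))

variable [DecidableEq ι]

lemma pairingSum_piecewise_eq_of_card_eq (f : ι ⊕ ι ↪ n) {S T : Finset ι} (hST : #S = #T)
    (A B : Matrix n n R) :
    pairingSum f (S.piecewise (fun _ => A) fun _ => B) =
      pairingSum f (T.piecewise (fun _ => A) fun _ => B) := by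
  have e : S ≃ T := S.equivOfCardEq hST
  rw [← pairingSum_comp_perm f e.extendSubtype (T.piecewise _ _)]
  congr 1 with i : 1
  by_cases hi : i ∈ S
  · rw [piecewise_eq_of_mem _ _ _ hi, piecewise_eq_of_mem _ _ _ (e.extendSubtype_mem i hi)]
  · rw [piecewise_eq_of_notMem _ _ _ hi,
      piecewise_eq_of_notMem _ _ _ (e.extendSubtype_not_mem i hi)]

lemma pairingSum_update_transpose (f : ι ⊕ ι ↪ n) (C : ι → Matrix n n R) (k : ι)
    (X : Matrix n n R) :
    pairingSum f (Function.update C k Xᵀ) = -pairingSum f (Function.update C k X) := by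
  have swap_positions := pairingSum_perm_trans f (swap (.inl k) (.inr k)) (Function.update C k X)
  rw [Perm.sign_swap Sum.inl_ne_inr, Units.val_neg, Units.val_one, Int.cast_neg, Int.cast_one,
    neg_one_mul] at swap_positions
  rw [← swap_positions, pairingSum_apply, pairingSum_apply]
  refine sum_congr rfl fun σ _ => congrArg _ (prod_congr rfl fun i _ => ?_)
  obtain rfl | hik := eq_or_ne i k
  · simp
  · simp [hik, swap_apply_of_ne_of_ne]

lemma pairingSum_update_sub_transpose (f : ι ⊕ ι ↪ n) (C : ι → Matrix n n R) (k : ι)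
    (X : Matrix n n R) :
    pairingSum f (Function.update C k (X - Xᵀ)) = 2 * pairingSum f (Function.update C k X) := by
  rw [MultilinearMap.map_update_sub, pairingSum_update_transpose, sub_neg_eq_add, two_mul]

lemma pairingSum_piecewise_sub_transpose (f : ι ⊕ ι ↪ n) (T : Finset ι) (A B : ι → Matrix n n R) :
    pairingSum f (T.piecewise (fun i => A i - (A i)ᵀ) B) =
      2 ^ #T * pairingSum f (T.piecewise A B) := by
  induction T using Finset.induction_on generalizing B with
  | empty => simp
  | insert k T hk ih =>
    rw [piecewise_insert, piecewise_insert, pairingSum_update_sub_transpose,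
      update_piecewise_of_notMem _ _ _ hk, update_piecewise_of_notMem _ _ _ hk, ih,
      card_insert_of_notMem hk, pow_succ', mul_assoc]

lemma pairingSum_sub_transpose_add (f : ι ⊕ ι ↪ n) (A B : Matrix n n R) :
    pairingSum f (fun _ => A - Aᵀ + B) =
      ∑ T : Finset ι, 2 ^ #T * pairingSum f (T.piecewise (fun _ => A) fun _ => B) :=
  ((pairingSum f).map_add_univ (fun _ => A - Aᵀ) fun _ => B).trans <|
    sum_congr rfl fun T _ => pairingSum_piecewise_sub_transpose f T (fun _ => A) fun _ => B

theorem pfaff_split_general {M : ℕ} (f : Fin M ⊕ Fin M ↪ n) (A B : Matrix n n R) :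
    pairingSum f (fun _ => A - Aᵀ + B) =
      ∑ s ∈ range (M + 1), 2 ^ s * (M.choose s : R) *
        pairingSum f (fun i => if (i : ℕ) < s then A else B) := by
  rw [pairingSum_sub_transpose_add, ← powerset_univ, sum_powerset, card_univ, Fintype.card_fin]
  refine sum_congr rfl fun s hs => ?_
  have initial_segment (T : Finset (Fin M)) (hT : T ∈ powersetCard s univ) :
      2 ^ #T * pairingSum f (T.piecewise (fun _ => A) fun _ => B) =
        2 ^ s * pairingSum f (fun i => if (i : ℕ) < s then A else B) := by
    have card_T : #T = s := (mem_powersetCard.mp hT).2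
    have card_eq : #T = #{i : Fin M | (i : ℕ) < s} := by
      rw [card_T, Fin.card_filter_val_lt, min_eq_right (mem_range_succ_iff.mp hs)]
    rw [pairingSum_piecewise_eq_of_card_eq f card_eq, card_T]
    congr 2 with i : 1
    simp only [Finset.piecewise, mem_filter_univ]
  rw [sum_congr rfl initial_segment, sum_const, card_powersetCard, card_univ, Fintype.card_fin,
    nsmul_eq_mul, mul_left_comm, mul_assoc]

end PairingSum

/-- The positions of the pairs in a pfaffian: the `i`-th pair is `(2 * i, 2 * i + 1)`, counting
from `0`. The last index is left over if `m` is odd. -/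
def consecutivePairs (m : ℕ) : Fin (m / 2) ⊕ Fin (m / 2) ↪ Fin m where
  toFun := Sum.elim (fun i => ⟨2 * (i : ℕ), by omega⟩) (fun i => ⟨2 * (i : ℕ) + 1, by omega⟩)
  inj' := Function.Injective.sumElim
    (fun i j h => Fin.ext (by simpa using h))
    (fun i j h => Fin.ext (by simpa using h))
    (fun i j h => by have := congrArg Fin.val h; dsimp only at this; omega)

lemma pfaff_eq_pairingSum (m : ℕ) (A : Matrix (Fin m) (Fin m) ℂ) :
    pfaff m A =
      1 / (2 ^ (m / 2) * ((m / 2).factorial : ℂ)) *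
        pairingSum (consecutivePairs m) (fun _ => A) := by
  rw [pairingSum_apply]
  rfl

lemma pairingSum_consecutivePairs_ite {R : Type*} [CommRing R] (m s : ℕ)
    (A B : Matrix (Fin m) (Fin m) R) :
    pairingSum (consecutivePairs m) (fun i => if (i : ℕ) < s then A else B) =
      ∑ σ : Perm (Fin m), ((Perm.sign σ : ℤ) : R) *
        ∏ i : Fin (m / 2),
          if (i : ℕ) < s then A (σ ⟨2 * (i : ℕ), by omega⟩) (σ ⟨2 * (i : ℕ) + 1, by omega⟩)
          else B (σ ⟨2 * (i : ℕ), by omega⟩) (σ ⟨2 * (i : ℕ) + 1, by omega⟩) := by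
  rw [pairingSum_apply]
  refine sum_congr rfl fun σ _ => congrArg _ (prod_congr rfl fun i _ => ?_)
  split_ifs <;> rfl

/-- Expansion of `pfaff(a_{ij} − a_{ji} + b_{ij})` for skew-symmetric `B`:
`(1/M!) Σ_{s=0}^{M} 2^{s−M} binom(M,s) Σ_σ sgn(σ) Π_{i=1}^{s} a_{σ(2i−1),σ(2i)}
  Π_{i=s+1}^{M} b_{σ(2i−1),σ(2i)}`. -/
theorem pfaff_split (m : ℕ) (hm : 1 ≤ m) (A B : Matrix (Fin m) (Fin m) ℂ)
    (hB : ∀ i j, B j i = -B i j) :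
    pfaff m (Matrix.of fun i j => A i j - A j i + B i j) =
      (1 / (Nat.factorial (m / 2) : ℂ)) *
        ∑ s ∈ Finset.range (m / 2 + 1),
          ((2 : ℂ) ^ s / (2 : ℂ) ^ (m / 2)) * (Nat.choose (m / 2) s : ℂ) *
            ∑ σ : Equiv.Perm (Fin m), ((Equiv.Perm.sign σ : ℤ) : ℂ) *
              ∏ i : Fin (m / 2),
                (if (i : ℕ) < s then
                  A (σ ⟨2 * (i : ℕ), by have := i.isLt; omega⟩)
                    (σ ⟨2 * (i : ℕ) + 1, by have := i.isLt; omega⟩)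
                else
                  B (σ ⟨2 * (i : ℕ), by have := i.isLt; omega⟩)
                    (σ ⟨2 * (i : ℕ) + 1, by have := i.isLt; omega⟩)) := by
  change pfaff m (A - Aᵀ + B) = _
  simp only [pfaff_eq_pairingSum, pfaff_split_general, ← pairingSum_consecutivePairs_ite, mul_sum]
  exact sum_congr rfl fun s _ => by field_simp
end
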